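/- (Høholdt–Jensen) Let s be a real number with -1/2 < s ≤ 1/2. For each odd prime p let L^{(p)} be the Legendre sequence of length p. Then, as p → ∞ through the odd primes, 1/F((L^{(p)})_s) converges to 1/6 + 8(|s| - 1/4)². -/

import Mathlib

open scoped BigOperators

noncomputable section

/-- `A` is an array of size `n × m`: entries vanish outside `[0,n) × [0,m)`. -/
def IsArray (n m : ℤ) (A : ℤ × ℤ → ℝ) : Prop :=
  ∀ i j : ℤ, A (i, j) ≠ 0 → 0 ≤ i ∧ i < n ∧ 0 ≤ j ∧ j < m

/-- `A` is a binary array of size `n × m`. -/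
def IsBinaryArray (n m : ℤ) (A : ℤ × ℤ → ℝ) : Prop :=
  IsArray n m A ∧
    ∀ i j : ℤ, 0 ≤ i → i < n → 0 ≤ j → j < m → A (i, j) = 1 ∨ A (i, j) = -1

/-- Aperiodic autocorrelation of a two-dimensional array at displacement `(u, v)`. -/
def autocorr (A : ℤ × ℤ → ℝ) (u v : ℤ) : ℝ :=
  ∑ᶠ i : ℤ, ∑ᶠ j : ℤ, A (i, j) * A (i + u, j + v)

/-- Merit factor of an array of size `n × m`. -/
def meritFactor (n m : ℤ) (A : ℤ × ℤ → ℝ) : ℝ :=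
  ((n : ℝ) * m) ^ 2 / ∑ᶠ uv ∈ {x : ℤ × ℤ | x ≠ (0, 0)}, (autocorr A uv.1 uv.2) ^ 2

/-- `a` is a sequence of length `n`: entries vanish outside `[0,n)`. -/
def IsSeq (n : ℤ) (a : ℤ → ℝ) : Prop := ∀ i : ℤ, a i ≠ 0 → 0 ≤ i ∧ i < n

/-- `a` is a binary sequence of length `n`. -/
def IsBinarySeq (n : ℤ) (a : ℤ → ℝ) : Prop :=
  IsSeq n a ∧ ∀ i : ℤ, 0 ≤ i → i < n → a i = 1 ∨ a i = -1

/-- Aperiodic autocorrelation of a sequence at displacement `u`. -/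
def seqAutocorr (a : ℤ → ℝ) (u : ℤ) : ℝ := ∑ᶠ i : ℤ, a i * a (i + u)

/-- Merit factor of a sequence of length `n`. -/
def seqMeritFactor (n : ℤ) (a : ℤ → ℝ) : ℝ :=
  (n : ℝ) ^ 2 / ∑ᶠ u ∈ {u : ℤ | u ≠ 0}, (seqAutocorr a u) ^ 2

/-- Rotation of a sequence of length `n` by a real number `s`. -/
def seqRotate (n : ℤ) (s : ℝ) (a : ℤ → ℝ) : ℤ → ℝ :=
  fun i => if 0 ≤ i ∧ i < n then a ((i + ⌊(n : ℝ) * s⌋) % n) else 0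

/-- Rotation of an array of size `n × m` by real numbers `s` and `t`. -/
def arrRotate (n m : ℤ) (s t : ℝ) (A : ℤ × ℤ → ℝ) : ℤ × ℤ → ℝ :=
  fun x => if 0 ≤ x.1 ∧ x.1 < n ∧ 0 ≤ x.2 ∧ x.2 < m then
    A ((x.1 + ⌊(n : ℝ) * s⌋) % n, (x.2 + ⌊(m : ℝ) * t⌋) % m) else 0

/-- Generating function of an array of size `n × m`, evaluated at `(x, y)`. -/
def genFun (n m : ℕ) (A : ℤ × ℤ → ℝ) (x y : ℂ) : ℂ :=
  ∑ i ∈ Finset.range n, ∑ j ∈ Finset.range m, (A (i, j) : ℂ) * x ^ i * y ^ j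

/-- `zeta d = e^{iπ/d}`, a primitive `(2d)`-th root of unity. -/
def zeta (d : ℕ) : ℂ := Complex.exp (Real.pi * Complex.I / d)

/-- `eps p j = e^{2πij/p}`, a `p`-th root of unity. -/
def eps (p : ℕ) (j : ℤ) : ℂ := Complex.exp (2 * Real.pi * Complex.I * j / p)

/-- The Legendre sequence of length `p` (for `p` an odd prime). -/
def legendreSeq (p : ℕ) : ℤ → ℝ :=
  fun i => if 0 ≤ i ∧ i < p then (if i = 0 then 1 else (jacobiSym i p : ℝ)) else 0

/-- The ternary Legendre sequence of length `p` (for `p` an odd prime). -/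
def ternaryLegendreSeq (p : ℕ) : ℤ → ℝ :=
  fun i => if 0 ≤ i ∧ i < p then (jacobiSym i p : ℝ) else 0

/-
Write `χ` for the quadratic character of `ZMod p`. For every rotation the sum of the squared
aperiodic autocorrelations is half the sum of the squared periodic ones plus half the sum of the
squared negacyclic ones. The periodic part is `O(p)`, because all nontrivial periodic correlations
of `χ` equal `-1`. The negacyclic correlations of `χ` have the absolute values of the periodic
correlations of `χ` multiplied by the powers of a primitive `2p`-th root of unity, so their squares
sum to a fourth moment of the Fourier transform of this product. The Gauss sum rewrites that
transform as the correlation of `χ` with the transform of the powers, and expanding the fourth power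
produces the sums `∑ j, χ (a - j) * χ (b - j) * χ (c - j) * χ (d - j)`. These are `p + O(1)` if the
entries of `(a, b, c, d)` match in pairs and `O(p ^ (3 / 4))` otherwise, by Mordell's elementary
argument, which averages over all cubics and needs no Riemann hypothesis for curves. Since the
transform of the powers has `ℓ¹` norm `O(p * log p)`, only the pairs matter. The fourth power is
`z * z * conj z * conj z`, with `a`, `b` indexing `z` and `c`, `d` indexing `conj z`: the pairs
`a = c`, `b = d` and `a = d`, `b = c`, less the overlaps and the zero displacement, give
`p ^ 2 / 3`, and `a = b`, `c = d` gives the square of `rotationOffset`, which carries the dependence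
on the rotation.
-/

section Pairings

variable {ι : Type*}

/-- The entries of the quadruple `(a, b, c, d)` can be matched in equal pairs. These quadruples
carry the main terms of the fourth moments below. -/
def EqualInPairs (a b c d : ι) : Prop :=
  (a = b ∧ c = d) ∨ (a = c ∧ b = d) ∨ (a = d ∧ b = c)

instance [DecidableEq ι] (a b c d : ι) : Decidable (EqualInPairs a b c d) :=
  inferInstanceAs (Decidable (_ ∨ _))

lemma exists_isolated_of_not_equalInPairs {a b c d : ι} (h : ¬EqualInPairs a b c d) :
    (a ≠ b ∧ a ≠ c ∧ a ≠ d) ∨ (b ≠ a ∧ b ≠ c ∧ b ≠ d) ∨ (c ≠ a ∧ c ≠ b ∧ c ≠ d) ∨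
      (d ≠ a ∧ d ≠ b ∧ d ≠ c) := by
  grind [EqualInPairs]

variable {R : Type*}

lemma ite_equalInPairs [DecidableEq ι] [CommRing R] (a b c d : ι) (x : R) :
    (if EqualInPairs a b c d then x else 0) =
      (if c = d then if a = b then x else 0 else 0) +
      (if b = d then if a = c then x else 0 else 0) +
      (if a = d then if b = c then x else 0 else 0) -
      2 * (if c = d then if b = c then if a = b then x else 0 else 0 else 0) := by
  grind [EqualInPairs]

variable [Fintype ι]

lemma sum_mul_sum_mul_sum_mul_sum [CommSemiring R] (a b c d : ι → R) :
    (∑ i, a i) * (∑ i, b i) * (∑ i, c i) * (∑ i, d i) =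
      ∑ i, ∑ j, ∑ k, ∑ l, a i * b j * c k * d l := by
  simp only [← Finset.mul_sum, ← Finset.sum_mul]

lemma sum_mul_sum_mul_sum_mul_sum_comm {κ : Type*} [Fintype κ] [CommSemiring R]
    (a b c d : κ → ι → R) :
    ∑ n, (∑ i, a n i) * (∑ i, b n i) * (∑ i, c n i) * (∑ i, d n i) =
      ∑ i, ∑ j, ∑ k, ∑ l, ∑ n, a n i * b n j * c n k * d n l := by
  simp only [sum_mul_sum_mul_sum_mul_sum]
  rw [Finset.sum_comm]
  refine Finset.sum_congr rfl fun i _ => ?_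
  rw [Finset.sum_comm]
  refine Finset.sum_congr rfl fun j _ => ?_
  rw [Finset.sum_comm]
  exact Finset.sum_congr rfl fun k _ => Finset.sum_comm

lemma sum_ite_equalInPairs [DecidableEq ι] [CommRing R] (f g : ι → R) :
    ∑ a, ∑ b, ∑ c, ∑ d, (if EqualInPairs a b c d then f a * f b * g c * g d else 0) =
      2 * (∑ a, f a * g a) ^ 2 + (∑ a, f a ^ 2) * (∑ a, g a ^ 2) -
        2 * ∑ a, f a ^ 2 * g a ^ 2 := by
  simp only [ite_equalInPairs, Finset.sum_add_distrib, Finset.sum_sub_distrib, ← Finset.mul_sum]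
  simp only [sq, two_mul, Finset.sum_mul_sum]
  simp [mul_comm, mul_left_comm]
  ring

end Pairings

section CharacterSums

variable {F : Type*} [Field F] [Fintype F] [DecidableEq F]

local notation "χ" => quadraticChar F

lemma abs_quadraticChar_le_one (a : F) : |χ a| ≤ 1 := by
  rcases quadraticChar_isQuadratic F a with h | h | h <;> simp [h]

lemma quadraticChar_pow_four_eq_one {a : F} (ha : a ≠ 0) : χ a ^ 4 = 1 := by
  rw [show 4 = 2 * 2 from rfl, pow_mul, quadraticChar_sq_one ha, one_pow]

lemma sum_quadraticChar_affine (hF : ringChar F ≠ 2) {a : F} (ha : a ≠ 0) (b : F) :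
    ∑ t, χ (b + t * a) = 0 := by
  rw [← quadraticChar_sum_zero hF]
  exact Fintype.sum_equiv ((Equiv.mulRight₀ a ha).trans (Equiv.addLeft b)) _ _ fun t => rfl

section LinearFamilies

variable {V ι : Type*} [AddCommGroup V] [Module F V] [Fintype V]

lemma sum_quadraticChar_mul_eq_zero_of_invariant (hF : ringChar F ≠ 2) (ℓ : V →ₗ[F] F) {h : V}
    (hh : ℓ h ≠ 0) {Φ : V → ℤ} (hΦ : ∀ (v : V) (l : F), Φ (v + l • h) = Φ v) :
    ∑ v, χ (ℓ v) * Φ v = 0 := by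
  have hshift (l : F) :
      ∑ v, χ (ℓ (v + l • h)) * Φ (v + l • h) = ∑ v, χ (ℓ v) * Φ v :=
    Fintype.sum_equiv (Equiv.addRight (l • h)) _ _ fun v => rfl
  have havg : ∑ l : F, ∑ v, χ (ℓ (v + l • h)) * Φ (v + l • h) = 0 := by
    rw [Finset.sum_comm]
    refine Finset.sum_eq_zero fun v _ => ?_
    simp only [hΦ, map_add, map_smul, smul_eq_mul, ← Finset.sum_mul,
      sum_quadraticChar_affine hF hh, zero_mul]
  simpa only [hshift, Finset.sum_const, Finset.card_univ, smul_eq_zero, Fintype.card_ne_zero,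
    false_or] using havg

/-- For every member of the family and any three others, some vector is killed by the three but
not by the one: this makes the values of the family at a random vector `4`-wise independent. -/
def SeparatesFromTriples (ℓ : ι → V →ₗ[F] F) : Prop :=
  ∀ ⦃a b c d : ι⦄, a ≠ b → a ≠ c → a ≠ d → ∃ h, ℓ a h ≠ 0 ∧ ℓ b h = 0 ∧ ℓ c h = 0 ∧ ℓ d h = 0

variable {ℓ : ι → V →ₗ[F] F}

lemma SeparatesFromTriples.sum_eq_zero (hℓ : SeparatesFromTriples ℓ) (hF : ringChar F ≠ 2)
    {a b c d : ι} (hab : a ≠ b) (hac : a ≠ c) (had : a ≠ d) :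
    ∑ v, χ (ℓ a v) * (χ (ℓ b v) * χ (ℓ c v) * χ (ℓ d v)) = 0 := by
  obtain ⟨h, ha, hb, hc, hd⟩ := hℓ hab hac had
  exact sum_quadraticChar_mul_eq_zero_of_invariant hF (ℓ a) ha fun v l => by simp [hb, hc, hd]

lemma SeparatesFromTriples.sum_le [DecidableEq ι] (hℓ : SeparatesFromTriples ℓ)
    (hF : ringChar F ≠ 2) (a b c d : ι) :
    ∑ v, χ (ℓ a v) * χ (ℓ b v) * χ (ℓ c v) * χ (ℓ d v) ≤
      if EqualInPairs a b c d then (Fintype.card V : ℤ) else 0 := by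
  split_ifs with h
  · refine (Finset.sum_le_card_nsmul _ _ 1 fun v _ => (le_abs_self _).trans ?_).trans (by simp)
    simp only [abs_mul]
    exact mul_le_one₀ (mul_le_one₀ (mul_le_one₀ (abs_quadraticChar_le_one _) (abs_nonneg _)
      (abs_quadraticChar_le_one _)) (abs_nonneg _) (abs_quadraticChar_le_one _)) (abs_nonneg _)
      (abs_quadraticChar_le_one _)
  · refine le_of_eq ?_
    rcases exists_isolated_of_not_equalInPairs h with h | h | h | h <;>
      simpa only [mul_comm, mul_left_comm, mul_assoc] using hℓ.sum_eq_zero hF h.1 h.2.1 h.2.2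

lemma SeparatesFromTriples.fourth_moment_le [Fintype ι] (hℓ : SeparatesFromTriples ℓ)
    (hF : ringChar F ≠ 2) :
    ∑ v, (∑ t, χ (ℓ t v)) ^ 4 ≤ 3 * Fintype.card V * (Fintype.card ι : ℤ) ^ 2 := by
  classical
  calc ∑ v, (∑ t, χ (ℓ t v)) ^ 4
      = ∑ a, ∑ b, ∑ c, ∑ d, ∑ v, χ (ℓ a v) * χ (ℓ b v) * χ (ℓ c v) * χ (ℓ d v) := by
        rw [← sum_mul_sum_mul_sum_mul_sum_comm]
        exact Finset.sum_congr rfl fun v _ => by ring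
    _ ≤ ∑ a : ι, ∑ b : ι, ∑ c : ι, ∑ d : ι,
          Fintype.card V * (if EqualInPairs a b c d then (1 * 1 * 1 * 1 : ℤ) else 0) := by
        gcongr with a _ b _ c _ d _
        simpa using hℓ.sum_le hF a b c d
    _ = Fintype.card V * (3 * (Fintype.card ι : ℤ) ^ 2 - 2 * Fintype.card ι) := by
        simp only [← Finset.mul_sum, sum_ite_equalInPairs (fun _ : ι => (1 : ℤ)) fun _ => 1]
        simp
        ring
    _ ≤ 3 * Fintype.card V * (Fintype.card ι : ℤ) ^ 2 := by
        nlinarith [Nat.cast_nonneg (α := ℤ) (Fintype.card V * Fintype.card ι)]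

end LinearFamilies

end CharacterSums

section CubicCharacterSums

open Polynomial

variable {F : Type*} [Field F]

lemma separatesFromTriples_eval :
    SeparatesFromTriples fun t : F => (leval t).domRestrict (degreeLT F 4) := by
  intro a b c d hab hac had
  refine ⟨⟨(X - C b) * (X - C c) * (X - C d), mem_degreeLT.mpr ?_⟩, ?_, ?_, ?_, ?_⟩
  · exact (degree_le_of_natDegree_le (n := 3) (by compute_degree)).trans_lt (by norm_num)
  all_goals simp [sub_ne_zero, *]

/-- The cubic with leading coefficient `e` whose roots are the images of `0`, `1`, `κ` under the
affine map sending `0` to `r₁` and `1` to `r₂`. -/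
def affineCubic (κ e r₁ r₂ : F) : degreeLT F 4 :=
  ⟨C e * (X - C r₁) * (X - C r₂) * (X - C (r₁ + κ * (r₂ - r₁))), mem_degreeLT.mpr
    ((degree_le_of_natDegree_le (n := 3) (by compute_degree)).trans_lt (by norm_num))⟩

lemma eval_affineCubic (κ e r₁ r₂ t : F) : (affineCubic κ e r₁ r₂ : F[X]).eval t =
    e * (t - r₁) * (t - r₂) * (t - (r₁ + κ * (r₂ - r₁))) := by
  simp [affineCubic]

lemma leadingCoeff_affineCubic (κ e r₁ r₂ : F) :
    (affineCubic κ e r₁ r₂ : F[X]).leadingCoeff = e := by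
  simp only [affineCubic, leadingCoeff_mul, leadingCoeff_C, leadingCoeff_X_sub_C, mul_one]

variable [Fintype F]

instance fintypeDegreeLT (n : ℕ) : Fintype (degreeLT F n) :=
  Fintype.ofEquiv _ (degreeLTEquiv F n).symm.toEquiv

lemma card_degreeLT (n : ℕ) : Fintype.card (degreeLT F n) = Fintype.card F ^ n := by
  simp [Fintype.card_congr (degreeLTEquiv F n).toEquiv]

/-- If `f` vanishes at `a`, then substituting `y = (a - j)⁻¹` in `∑ j, f j` reaches every `y`
except `0`. -/
lemma sum_eq_sum_sub_of_inv {M : Type*} [AddCommGroup M] {f g : F → M} {a : F}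
    (hfa : f a = 0) (hfg : ∀ j, j ≠ a → f j = g (a - j)⁻¹) :
    ∑ j, f j = ∑ y, g y - g 0 := by
  classical
  rw [← Finset.add_sum_erase _ g (Finset.mem_univ 0), add_sub_cancel_left,
    ← Finset.add_sum_erase _ f (Finset.mem_univ a), hfa, zero_add]
  refine Finset.sum_bij' (fun j _ => (a - j)⁻¹) (fun y _ => a - y⁻¹) ?_ ?_ ?_ ?_ ?_
  · simp +contextual [sub_eq_zero, eq_comm]
  · simp +contextual [sub_eq_self]
  · simp
  · simp
  · exact fun j hj => hfg j (Finset.ne_of_mem_erase hj)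

variable [DecidableEq F]

local notation "χ" => quadraticChar F

lemma fourth_moment_cubics_le (hF : ringChar F ≠ 2) :
    ∑ P : degreeLT F 4, (∑ t, χ ((P : F[X]).eval t)) ^ 4 ≤ 3 * (Fintype.card F : ℤ) ^ 6 := by
  refine (separatesFromTriples_eval.fourth_moment_le hF).trans_eq ?_
  rw [card_degreeLT]
  push_cast
  ring

lemma sum_affineCubic_pow_four {e r₁ r₂ : F} (he : e ≠ 0) (hr : r₁ ≠ r₂) (κ : F) :
    (∑ t, χ ((affineCubic κ e r₁ r₂ : F[X]).eval t)) ^ 4 =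
      (∑ t, χ (t * (t - 1) * (t - κ))) ^ 4 := by
  have hδ : r₂ - r₁ ≠ 0 := sub_ne_zero.mpr hr.symm
  have hsub : ∑ t, χ ((affineCubic κ e r₁ r₂ : F[X]).eval t) =
      χ (e * (r₂ - r₁) ^ 3) * ∑ t, χ (t * (t - 1) * (t - κ)) := by
    rw [Finset.mul_sum]
    symm
    refine Fintype.sum_equiv ((Equiv.mulRight₀ _ hδ).trans (Equiv.addLeft r₁)) _ _ fun t => ?_
    rw [← map_mul, eval_affineCubic]
    congr 1
    simp only [Equiv.trans_apply, Equiv.mulRight₀_apply, Equiv.coe_addLeft]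
    ring
  rw [hsub, mul_pow, quadraticChar_pow_four_eq_one (mul_ne_zero he (pow_ne_zero _ hδ)), one_mul]

variable (F) in
/-- The parameters `(e, r₁, r₂)` for which `affineCubic` is a nonzero cubic with `r₁ ≠ r₂`. -/
def affineParams : Finset (F × F × F) := {0}ᶜ ×ˢ Finset.univ.offDiag

lemma mem_affineParams {x : F × F × F} : x ∈ affineParams F ↔ x.1 ≠ 0 ∧ x.2.1 ≠ x.2.2 := by
  simp [affineParams]

variable (F) in
lemma card_affineParams : ((affineParams F).card : ℤ) =
    (Fintype.card F - 1) * (Fintype.card F * (Fintype.card F - 1)) := by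
  have h := Nat.le_mul_self (Fintype.card F)
  simp only [affineParams, Finset.card_product, Finset.card_compl, Finset.card_singleton,
    Finset.offDiag_card, Finset.card_univ]
  push_cast [h, Nat.one_le_iff_ne_zero.mpr Fintype.card_ne_zero]
  ring

lemma card_affineParams_le_mul_card_image (κ : F) : (affineParams F).card ≤
    9 * ((affineParams F).image fun x => affineCubic κ x.1 x.2.1 x.2.2).card := by
  refine Finset.card_le_mul_card_image _ 9 fun P _ => ?_
  have hroots : (P : F[X]).roots.toFinset.card ≤ 3 := by
    refine (Multiset.toFinset_card_le _).trans ((card_roots' _).trans ?_)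
    exact natDegree_le_of_degree_le (Order.le_of_lt_succ (mem_degreeLT.mp P.2))
  calc _ ≤ ({(P : F[X]).leadingCoeff} ×ˢ
        ((P : F[X]).roots.toFinset ×ˢ (P : F[X]).roots.toFinset)).card := by
        refine Finset.card_le_card fun x hx => ?_
        obtain ⟨hmem, rfl⟩ := Finset.mem_filter.mp hx
        have hP0 : (affineCubic κ x.1 x.2.1 x.2.2 : F[X]) ≠ 0 := by
          rw [← leadingCoeff_ne_zero, leadingCoeff_affineCubic]
          exact (mem_affineParams.mp hmem).1
        simp [mem_roots hP0, eval_affineCubic, leadingCoeff_affineCubic]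
    _ ≤ 1 * (3 * 3) := by
        rw [Finset.card_product, Finset.card_product, Finset.card_singleton]
        gcongr

/-- Mordell's bound: the cubics with roots affinely equivalent to `0, 1, κ` all have the same
character sum up to sign, and there are enough of them for the fourth moment to control it. -/
lemma sum_legendreForm_pow_four_le (hF : ringChar F ≠ 2) (κ : F) :
    (∑ t, χ (t * (t - 1) * (t - κ))) ^ 4 ≤ 108 * (Fintype.card F : ℤ) ^ 3 := by
  set T := ∑ t, χ (t * (t - 1) * (t - κ))
  set q := (Fintype.card F : ℤ)
  set orbit := (affineParams F).image fun x => affineCubic κ x.1 x.2.1 x.2.2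
  have hmoment : orbit.card * T ^ 4 ≤ 3 * q ^ 6 := by
    refine le_trans ?_ (fourth_moment_cubics_le hF)
    rw [← nsmul_eq_mul, ← Finset.sum_const]
    refine (Finset.sum_congr rfl fun P hP => ?_).trans_le
      (Finset.sum_le_sum_of_subset_of_nonneg (Finset.subset_univ orbit)
        fun _ _ _ => by positivity)
    obtain ⟨x, hx, rfl⟩ := Finset.mem_image.mp hP
    exact (sum_affineCubic_pow_four (mem_affineParams.mp hx).1 (mem_affineParams.mp hx).2 κ).symm
  have horbit : (q - 1) * (q * (q - 1)) ≤ 9 * orbit.card := by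
    rw [← card_affineParams]
    exact_mod_cast card_affineParams_le_mul_card_image κ
  have hq : 1 < q := Nat.one_lt_cast.mpr Fintype.one_lt_card
  have hsq : q ^ 2 ≤ 4 * (q - 1) ^ 2 := by nlinarith
  refine le_of_mul_le_mul_left (a := q ^ 3) ?_ (by positivity)
  calc q ^ 3 * T ^ 4 = q ^ 2 * (q * T ^ 4) := by ring
    _ ≤ 4 * (q - 1) ^ 2 * (q * T ^ 4) := by gcongr
    _ = 4 * ((q - 1) * (q * (q - 1)) * T ^ 4) := by ring
    _ ≤ 4 * (9 * orbit.card * T ^ 4) := by gcongr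
    _ = 36 * (orbit.card * T ^ 4) := by ring
    _ ≤ 36 * (3 * q ^ 6) := by gcongr
    _ = q ^ 3 * (108 * q ^ 3) := by ring

lemma sum_cubic_pow_four_le (hF : ringChar F ≠ 2) {e r₁ r₂ : F} (he : e ≠ 0) (hr : r₁ ≠ r₂)
    (r₃ : F) :
    (∑ t, χ (e * (t - r₁) * (t - r₂) * (t - r₃))) ^ 4 ≤ 108 * (Fintype.card F : ℤ) ^ 3 := by
  have h := sum_affineCubic_pow_four he hr ((r₃ - r₁) / (r₂ - r₁))
  simp only [eval_affineCubic, div_mul_cancel₀ _ (sub_ne_zero.mpr hr.symm), add_sub_cancel] at h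
  exact h.trans_le (sum_legendreForm_pow_four_le hF _)

lemma quadraticChar_sub_eq_mul {a j : F} (h : j ≠ a) (b : F) :
    χ (b - j) = χ (a - j) * χ (1 + (b - a) * (a - j)⁻¹) := by
  have h' : a - j ≠ 0 := sub_ne_zero.mpr h.symm
  rw [← map_mul]
  congr 1
  field_simp
  ring

lemma sum_quadraticChar_mul (hF : ringChar F ≠ 2) (a b : F) :
    ∑ j, χ (a - j) * χ (b - j) = (if a = b then (Fintype.card F : ℤ) else 0) - 1 := by
  rw [sum_eq_sum_sub_of_inv (a := a) (g := fun y => χ (1 + y * (b - a))) (by simp)]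
  · split_ifs with hab
    · simp [hab]
    · rw [sum_quadraticChar_affine hF (sub_ne_zero.mpr (Ne.symm hab)), zero_mul, add_zero, map_one]
  · intro j hj
    rw [quadraticChar_sub_eq_mul hj b, ← mul_assoc, ← sq,
      quadraticChar_sq_one (sub_ne_zero.mpr hj.symm), one_mul, mul_comm (b - a)]

/-- The correlation of four translates of the quadratic character. -/
def quarticCharSum (a b c d : F) : ℤ := ∑ j, χ (a - j) * χ (b - j) * χ (c - j) * χ (d - j)

lemma quarticCharSum_eq_cubic {a b c d : F} (hb : a ≠ b) (hc : a ≠ c) (hd : a ≠ d) :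
    quarticCharSum a b c d = ∑ y, χ ((b - a) * (c - a) * (d - a) * (y - (a - b)⁻¹) *
      (y - (a - c)⁻¹) * (y - (a - d)⁻¹)) - 1 := by
  have hfactor (y : F) : (b - a) * (c - a) * (d - a) * (y - (a - b)⁻¹) * (y - (a - c)⁻¹) *
      (y - (a - d)⁻¹) = (1 + (b - a) * y) * (1 + (c - a) * y) * (1 + (d - a) * y) := by
    have hlin {x : F} (hx : a ≠ x) : (x - a) * (y - (a - x)⁻¹) = 1 + (x - a) * y := by
      have := sub_ne_zero.mpr hx
      field_simp
      ring
    rw [← hlin hb, ← hlin hc, ← hlin hd]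
    ring
  rw [quarticCharSum, sum_eq_sum_sub_of_inv (a := a)
    (g := fun y => χ ((1 + (b - a) * y) * (1 + (c - a) * y) * (1 + (d - a) * y))) (by simp)]
  · simp [hfactor]
  · intro j hj
    rw [quadraticChar_sub_eq_mul hj b, quadraticChar_sub_eq_mul hj c,
      quadraticChar_sub_eq_mul hj d, map_mul, map_mul]
    linear_combination (χ (1 + (b - a) * (a - j)⁻¹) * χ (1 + (c - a) * (a - j)⁻¹) *
      χ (1 + (d - a) * (a - j)⁻¹)) * quadraticChar_pow_four_eq_one (sub_ne_zero.mpr hj.symm)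

lemma abs_quarticCharSum_self_sub_le (hF : ringChar F ≠ 2) (a c d : F) :
    |quarticCharSum a a c d - if c = d then (Fintype.card F : ℤ) else 0| ≤ 2 := by
  have hsplit : quarticCharSum a a c d + χ (c - a) * χ (d - a) =
      ∑ j, χ (c - j) * χ (d - j) := by
    rw [quarticCharSum, ← Finset.add_sum_erase _ _ (Finset.mem_univ a),
      ← Finset.add_sum_erase _ (fun j => χ (c - j) * χ (d - j)) (Finset.mem_univ a), add_comm]
    simp only [sub_self, MulChar.map_zero, zero_mul, zero_add, add_right_inj]
    refine Finset.sum_congr rfl fun j hj => ?_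
    rw [← sq, quadraticChar_sq_one (sub_ne_zero.mpr (Finset.ne_of_mem_erase hj).symm), one_mul]
  have hle : |χ (c - a) * χ (d - a)| ≤ 1 := by
    rw [abs_mul]
    exact mul_le_one₀ (abs_quadraticChar_le_one _) (abs_nonneg _) (abs_quadraticChar_le_one _)
  rw [sum_quadraticChar_mul hF] at hsplit
  rw [abs_le] at hle ⊢
  constructor <;> linarith

/-- The deviation of `quarticCharSum` from its main term. -/
def quarticCharError (a b c d : F) : ℤ :=
  quarticCharSum a b c d - if EqualInPairs a b c d then (Fintype.card F : ℤ) else 0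

lemma quarticCharError_swap_left (a b c d : F) :
    quarticCharError b a c d = quarticCharError a b c d := by
  unfold quarticCharError quarticCharSum
  congr 1
  · exact Finset.sum_congr rfl fun j _ => by ring
  · grind [EqualInPairs]

lemma quarticCharError_swap_middle (a b c d : F) :
    quarticCharError a c b d = quarticCharError a b c d := by
  unfold quarticCharError quarticCharSum
  congr 1
  · exact Finset.sum_congr rfl fun j _ => by ring
  · grind [EqualInPairs]

lemma quarticCharError_swap_right (a b c d : F) :
    quarticCharError a b d c = quarticCharError a b c d := by
  unfold quarticCharError quarticCharSum
  congr 1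
  · exact Finset.sum_congr rfl fun j _ => by ring
  · grind [EqualInPairs]

lemma abs_quarticCharError_self_le (hF : ringChar F ≠ 2) (a c d : F) :
    |quarticCharError a a c d| ≤ 2 := by
  have hpairs : EqualInPairs a a c d ↔ c = d := by grind [EqualInPairs]
  simpa only [quarticCharError, hpairs] using abs_quarticCharSum_self_sub_le hF a c d

lemma abs_quarticCharError_le_two (hF : ringChar F ≠ 2) {a b c d : F}
    (h : a = b ∨ a = c ∨ a = d ∨ b = c ∨ b = d ∨ c = d) : |quarticCharError a b c d| ≤ 2 := by
  rcases h with rfl | rfl | rfl | rfl | rfl | rfl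
  · exact abs_quarticCharError_self_le hF _ _ _
  · rw [← quarticCharError_swap_middle]
    exact abs_quarticCharError_self_le hF _ _ _
  · rw [← quarticCharError_swap_right, ← quarticCharError_swap_middle]
    exact abs_quarticCharError_self_le hF _ _ _
  · rw [← quarticCharError_swap_left, ← quarticCharError_swap_middle]
    exact abs_quarticCharError_self_le hF _ _ _
  · rw [← quarticCharError_swap_right, ← quarticCharError_swap_left,
      ← quarticCharError_swap_middle]
    exact abs_quarticCharError_self_le hF _ _ _
  · rw [← quarticCharError_swap_middle, ← quarticCharError_swap_left,
      ← quarticCharError_swap_right, ← quarticCharError_swap_middle]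
    exact abs_quarticCharError_self_le hF _ _ _

lemma abs_sum_cubic_le (hF : ringChar F ≠ 2) {e r₁ r₂ : F} (he : e ≠ 0) (hr : r₁ ≠ r₂) (r₃ : F) :
    |((∑ t, χ (e * (t - r₁) * (t - r₂) * (t - r₃)) : ℤ) : ℝ)| ≤
      4 * (Fintype.card F : ℝ) ^ (3 / 4 : ℝ) := by
  have hpow : ((Fintype.card F : ℝ) ^ (3 / 4 : ℝ)) ^ 4 = (Fintype.card F : ℝ) ^ 3 := by
    rw [← Real.rpow_mul_natCast (Nat.cast_nonneg _)]
    norm_num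
  refine le_of_pow_le_pow_left₀ (n := 4) (by norm_num) (by positivity) ?_
  rw [mul_pow, hpow, Even.pow_abs (by decide)]
  calc ((∑ t, χ (e * (t - r₁) * (t - r₂) * (t - r₃)) : ℤ) : ℝ) ^ 4
      ≤ 108 * (Fintype.card F : ℝ) ^ 3 := by exact_mod_cast sum_cubic_pow_four_le hF he hr r₃
    _ ≤ 4 ^ 4 * (Fintype.card F : ℝ) ^ 3 := by
        gcongr
        norm_num

lemma abs_quarticCharError_le (hF : ringChar F ≠ 2) (a b c d : F) :
    |(quarticCharError a b c d : ℝ)| ≤ 5 * (Fintype.card F : ℝ) ^ (3 / 4 : ℝ) := by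
  have hq : (1 : ℝ) ≤ (Fintype.card F : ℝ) ^ (3 / 4 : ℝ) :=
    Real.one_le_rpow (by exact_mod_cast Fintype.card_pos) (by norm_num)
  by_cases h : a = b ∨ a = c ∨ a = d ∨ b = c ∨ b = d ∨ c = d
  · have : |(quarticCharError a b c d : ℝ)| ≤ 2 := by
      exact_mod_cast abs_quarticCharError_le_two hF h
    linarith
  · simp only [not_or] at h
    obtain ⟨hab, hac, had, hbc, -, -⟩ := h
    have hcubic := abs_sum_cubic_le hF (e := (b - a) * (c - a) * (d - a))
      (by simp [sub_ne_zero, Ne.symm, *]) (r₁ := (a - b)⁻¹) (r₂ := (a - c)⁻¹)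
      (by simpa [sub_right_inj] using hbc) (a - d)⁻¹
    rw [quarticCharError, if_neg (by simp [EqualInPairs, hab, hac, had]), sub_zero,
      quarticCharSum_eq_cubic hab hac had, Int.cast_sub, Int.cast_one]
    refine (abs_sub _ _).trans ?_
    rw [abs_one]
    linarith

end CubicCharacterSums

section FourierAnalysis

open ComplexConjugate

variable {R : Type*} [CommRing R] [Fintype R]

/-- The Fourier transform of `b` with respect to the additive character `ψ`. -/
def charTransform (ψ : AddChar R ℂ) (b : R → ℂ) (m : R) : ℂ := ∑ x, b x * ψ (x * m)

/-- The periodic autocorrelation of `b` at displacement `u`. -/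
def periodicCorr (b : R → ℂ) (u : R) : ℂ := ∑ x, b (x + u) * conj (b x)

lemma conj_charTransform (ψ : AddChar R ℂ) (b : R → ℂ) (m : R) :
    conj (charTransform ψ b m) = charTransform ψ (fun x => conj (b (-x))) m := by
  simp only [charTransform, map_sum, map_mul, ← AddChar.map_neg_eq_conj]
  exact Fintype.sum_equiv (Equiv.neg R) _ _ fun x => by simp

lemma charTransform_mul_conj (ψ : AddChar R ℂ) (b : R → ℂ) (m : R) :
    charTransform ψ b m * conj (charTransform ψ b m) = charTransform ψ (periodicCorr b) m := by
  simp only [charTransform, periodicCorr, map_sum, map_mul, ← AddChar.map_neg_eq_conj]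
  rw [Finset.sum_mul_sum]
  simp only [Finset.sum_mul]
  rw [Finset.sum_comm, Finset.sum_comm (f := fun u x => b (x + u) * conj (b x) * ψ (u * m))]
  refine Finset.sum_congr rfl fun x _ => ?_
  symm
  refine Fintype.sum_equiv (Equiv.addLeft x) _ _ fun u => ?_
  have : ψ (u * m) = ψ ((x + u) * m) * ψ (-(x * m)) := by
    rw [← AddChar.map_add_eq_mul]
    congr 1
    ring
  simp only [Equiv.coe_addLeft, this]
  ring

lemma sum_charTransform_mul {ψ : AddChar R ℂ} (hψ : ψ.IsPrimitive) (b c : R → ℂ) :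
    ∑ m, charTransform ψ b m * charTransform ψ c m = Fintype.card R * ∑ x, b x * c (-x) := by
  classical
  have horth (x y : R) : ∑ m, b x * ψ (x * m) * (c y * ψ (y * m)) =
      if y = -x then Fintype.card R * (b x * c y) else 0 := by
    calc _ = b x * c y * ∑ m, ψ (m * (x + y)) := by
          rw [Finset.mul_sum]
          refine Finset.sum_congr rfl fun m _ => ?_
          rw [mul_add, AddChar.map_add_eq_mul, mul_comm m x, mul_comm m y]
          ring
      _ = _ := by
          simp [AddChar.sum_mulShift _ hψ, add_comm x y, add_eq_zero_iff_eq_neg, mul_comm]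
  simp only [charTransform, Finset.sum_mul_sum]
  rw [Finset.sum_comm, Finset.mul_sum]
  refine Finset.sum_congr rfl fun x _ => ?_
  rw [Finset.sum_comm]
  simp [horth]

lemma sum_norm_sq_charTransform {ψ : AddChar R ℂ} (hψ : ψ.IsPrimitive) (b : R → ℂ) :
    ∑ m, ‖charTransform ψ b m‖ ^ 2 = Fintype.card R * ∑ x, ‖b x‖ ^ 2 := by
  have h := sum_charTransform_mul hψ b fun x => conj (b (-x))
  simp only [← conj_charTransform, neg_neg, Complex.mul_conj'] at h
  exact_mod_cast h

lemma sum_norm_pow_four_charTransform {ψ : AddChar R ℂ} (hψ : ψ.IsPrimitive) (b : R → ℂ) :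
    ∑ m, ‖charTransform ψ b m‖ ^ 4 = Fintype.card R * ∑ u, ‖periodicCorr b u‖ ^ 2 := by
  rw [← sum_norm_sq_charTransform hψ]
  refine Finset.sum_congr rfl fun m _ => ?_
  rw [← charTransform_mul_conj, norm_mul, RCLike.norm_conj]
  ring

end FourierAnalysis

section FourthMoments

open ComplexConjugate

variable {κ ι : Type*} [Fintype κ] [Fintype ι]

lemma sum_norm_pow_four_eq (K : κ → ι → ℤ) (V : ι → ℂ) :
    ((∑ j, ‖∑ m, K j m * V m‖ ^ 4 : ℝ) : ℂ) =
      ∑ a, ∑ b, ∑ c, ∑ d,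
        V a * V b * conj (V c) * conj (V d) * (∑ j, K j a * K j b * K j c * K j d : ℤ) := by
  have hnorm (z : ℂ) : ((‖z‖ ^ 4 : ℝ) : ℂ) = z * z * conj z * conj z := by
    rw [mul_assoc, mul_mul_mul_comm, Complex.mul_conj']
    push_cast
    ring
  simp only [Complex.ofReal_sum, hnorm, map_sum, map_mul, map_intCast]
  rw [sum_mul_sum_mul_sum_mul_sum_comm]
  simp only [Int.cast_sum, Int.cast_mul, Finset.mul_sum]
  congr! 5
  ring

variable [DecidableEq ι]

lemma sum_ite_equalInPairs_conj (V : ι → ℂ) :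
    ∑ a, ∑ b, ∑ c, ∑ d,
        (if EqualInPairs a b c d then V a * V b * conj (V c) * conj (V d) else 0) =
      ((2 * (∑ m, ‖V m‖ ^ 2) ^ 2 + ‖∑ m, V m ^ 2‖ ^ 2 - 2 * ∑ m, ‖V m‖ ^ 4 : ℝ) : ℂ) := by
  have hfour (z : ℂ) : (‖z‖ : ℂ) ^ 4 = z ^ 2 * conj z ^ 2 := by
    rw [← mul_pow, Complex.mul_conj', ← pow_mul]
  rw [sum_ite_equalInPairs V fun m => conj (V m)]
  push_cast
  simp only [hfour, ← Complex.mul_conj', map_sum, map_pow]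

lemma abs_sum_norm_pow_four_sub_le {K : κ → ι → ℤ} {q : ℕ} {B : ℝ}
    (hK : ∀ a b c d, |((∑ j, K j a * K j b * K j c * K j d -
      if EqualInPairs a b c d then (q : ℤ) else 0 : ℤ) : ℝ)| ≤ B) (V : ι → ℂ) :
    |∑ j, ‖∑ m, K j m * V m‖ ^ 4 -
        q * (2 * (∑ m, ‖V m‖ ^ 2) ^ 2 + ‖∑ m, V m ^ 2‖ ^ 2 - 2 * ∑ m, ‖V m‖ ^ 4)| ≤
      B * (∑ m, ‖V m‖) ^ 4 := by
  rw [← Real.norm_eq_abs, ← Complex.norm_real, Complex.ofReal_sub, sum_norm_pow_four_eq,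
    Complex.ofReal_mul, ← sum_ite_equalInPairs_conj, show (∑ m, ‖V m‖) ^ 4 = (∑ m, ‖V m‖) *
      (∑ m, ‖V m‖) * (∑ m, ‖V m‖) * (∑ m, ‖V m‖) by ring, sum_mul_sum_mul_sum_mul_sum]
  simp only [Finset.mul_sum, ← Finset.sum_sub_distrib]
  refine norm_sum_le_of_le _ fun a _ => norm_sum_le_of_le _ fun b _ =>
    norm_sum_le_of_le _ fun c _ => norm_sum_le_of_le _ fun d _ => ?_
  calc _ = ‖V a * V b * conj (V c) * conj (V d) * ((∑ j, K j a * K j b * K j c * K j d -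
          if EqualInPairs a b c d then (q : ℤ) else 0 : ℤ) : ℂ)‖ := by
        congr 1
        split_ifs <;> push_cast <;> ring
    _ = |((∑ j, K j a * K j b * K j c * K j d -
          if EqualInPairs a b c d then (q : ℤ) else 0 : ℤ) : ℝ)| *
            (‖V a‖ * ‖V b‖ * ‖V c‖ * ‖V d‖) := by
        simp only [norm_mul, RCLike.norm_conj, Complex.norm_intCast]
        ring
    _ ≤ B * (‖V a‖ * ‖V b‖ * ‖V c‖ * ‖V d‖) := by
        gcongr
        exact hK a b c d

end FourthMoments

section GaussSums

variable {F : Type*} [Field F] [Fintype F] [DecidableEq F]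

local notation "χ" => quadraticChar F

lemma exists_gauss_factor (hF : ringChar F ≠ 2) {ψ : AddChar F ℂ} (hψ : ψ.IsPrimitive) :
    ∃ G : ℂ, ‖G‖ ^ 2 = Fintype.card F ∧ ∀ y, G * χ y = ∑ k, χ k * ψ (k * y) := by
  let χC : MulChar F ℂ := (quadraticChar F).ringHomComp (Int.castRingHom ℂ)
  have hχC (a : F) : χC a = χ a := rfl
  have hquad : χC.IsQuadratic := (quadraticChar_isQuadratic F).comp _
  have hne : χC ≠ 1 := (MulChar.ringHomComp_ne_one_iff (Int.castRingHom ℂ).injective_int).mpr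
    (quadraticChar_ne_one hF)
  refine ⟨gaussSum χC ψ, ?_, fun y => ?_⟩
  · have hnorm := congrArg norm (gaussSum_sq hne hquad hψ)
    have hunit : ‖χC (-1)‖ = 1 := by
      rcases quadraticChar_dichotomy (F := F) (a := -1) (by simp) with h | h <;> simp [hχC, h]
    rwa [norm_pow, norm_mul, hunit, one_mul, Complex.norm_natCast] at hnorm
  · rcases eq_or_ne y 0 with rfl | hy
    · have hsum : ∑ k, (χ k : ℂ) = 0 := by exact_mod_cast quadraticChar_sum_zero hF
      simp only [MulChar.map_zero, Int.cast_zero, mul_zero, AddChar.map_zero_eq_one, mul_one, hsum]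
    · have hshift := gaussSum_mulShift χC ψ (Units.mk0 y hy)
      have hsq : χC y * χC y = 1 := by
        rw [hχC]
        exact_mod_cast (sq _).symm.trans (quadraticChar_sq_one hy)
      rw [← hχC, ← hshift, Units.val_mk0, mul_right_comm, hsq, one_mul]
      simp only [gaussSum, AddChar.mulShift_apply, hχC, mul_comm y]

lemma gauss_mul_charTransform {ψ : AddChar F ℂ} {G : ℂ}
    (hG : ∀ y, G * χ y = ∑ k, χ k * ψ (k * y)) (v : F → ℂ) (j : F) :
    G * charTransform ψ (fun y => χ y * v y) j = ∑ m, χ (m - j) * charTransform ψ v m := by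
  simp only [charTransform, Finset.mul_sum, ← mul_assoc, hG]
  rw [Finset.sum_comm]
  refine Finset.sum_congr rfl fun y _ => ?_
  rw [Finset.sum_mul, Finset.sum_mul]
  refine Fintype.sum_equiv (Equiv.addRight j) _ _ fun k => ?_
  simp only [Equiv.coe_addRight, add_sub_cancel_right]
  rw [mul_add, AddChar.map_add_eq_mul, mul_comm y k]
  ring

/-- The Gauss sum turns the Fourier transform of `χ v` into the correlation of `χ` with the
Fourier transform of `v`, so its fourth moment only involves quartic character sums. -/
lemma abs_sum_periodicCorr_sub_le (hF : ringChar F ≠ 2) {ψ : AddChar F ℂ} (hψ : ψ.IsPrimitive)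
    (v : F → ℂ) :
    |∑ u, ‖periodicCorr (fun y => χ y * v y) u‖ ^ 2 -
      (2 * (∑ x, ‖v x‖ ^ 2) ^ 2 + ‖∑ x, v x * v (-x)‖ ^ 2 -
        2 / Fintype.card F * ∑ u, ‖periodicCorr v u‖ ^ 2)| ≤
      5 * (Fintype.card F : ℝ) ^ (3 / 4 : ℝ) * (∑ m, ‖charTransform ψ v m‖) ^ 4 /
        (Fintype.card F : ℝ) ^ 3 := by
  obtain ⟨G, hGnorm, hG⟩ := exists_gauss_factor hF hψ
  have hmoment := abs_sum_norm_pow_four_sub_le (K := fun j m => χ (m - j))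
    (abs_quarticCharError_le hF) (charTransform ψ v)
  have hsq : ∑ m, charTransform ψ v m ^ 2 = Fintype.card F * ∑ x, v x * v (-x) := by
    simp only [sq, sum_charTransform_mul hψ]
  have hG4 : ‖G‖ ^ 4 = (Fintype.card F : ℝ) ^ 2 := by
    rw [← hGnorm, ← pow_mul]
  simp only [← gauss_mul_charTransform hG, norm_mul, mul_pow] at hmoment
  rw [← Finset.mul_sum, hG4, sum_norm_pow_four_charTransform hψ,
    sum_norm_pow_four_charTransform hψ, sum_norm_sq_charTransform hψ, hsq, norm_mul,
    Complex.norm_natCast] at hmoment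
  have hq : (0 : ℝ) < Fintype.card F := Nat.cast_pos.mpr Fintype.card_pos
  rw [le_div_iff₀ (pow_pos hq 3)]
  refine le_of_eq_of_le ?_ hmoment
  nth_rw 1 [← abs_of_pos (pow_pos hq 3)]
  rw [← abs_mul]
  congr 1
  field_simp

end GaussSums

section NegacyclicTwist

open ComplexConjugate

section SumsOverZMod

variable {n : ℕ} [NeZero n]

lemma sum_val_eq_sum_range {M : Type*} [AddCommMonoid M] (f : ℕ → M) :
    ∑ x : ZMod n, f x.val = ∑ i ∈ Finset.range n, f i :=
  Finset.sum_nbij' ZMod.val (fun i => (i : ZMod n)) (fun x _ => Finset.mem_range.mpr x.val_lt)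
    (fun _ _ => Finset.mem_univ _) (fun x _ => ZMod.natCast_zmod_val x)
    (fun _ hi => ZMod.val_cast_of_lt (Finset.mem_range.mp hi)) fun _ _ => rfl

lemma sum_ite_val_lt {k : ℕ} (hk : k ≤ n) :
    ∑ x : ZMod n, (if x.val < k then (1 : ℝ) else -1) = 2 * k - n := by
  have hite (i : ℕ) : (if i < k then (1 : ℝ) else -1) = 2 * (if i < k then 1 else 0) - 1 := by
    split_ifs <;> norm_num
  have hfilter : {i ∈ Finset.range n | i < k} = Finset.range k := by
    ext i
    simp only [Finset.mem_filter, Finset.mem_range]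
    omega
  rw [sum_val_eq_sum_range fun i => if i < k then (1 : ℝ) else -1]
  simp only [hite, Finset.sum_sub_distrib, ← Finset.mul_sum, Finset.sum_boole, hfilter,
    Finset.card_range, Finset.sum_const, nsmul_eq_mul, mul_one]

lemma sum_range_sub_two_mul_sq (n : ℕ) (c : ℝ) :
    ∑ i ∈ Finset.range n, (c - 2 * i) ^ 2 =
      n * c ^ 2 - 2 * c * (n * (n - 1)) + 2 / 3 * (n * (n - 1) * (2 * n - 1)) := by
  induction n with
  | zero => simp
  | succ n ih =>
    rw [Finset.sum_range_succ, ih]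
    push_cast
    ring

end SumsOverZMod

lemma zeta_pow_self (n : ℕ) [NeZero n] : zeta n ^ n = -1 := by
  rw [zeta, ← Complex.exp_nat_mul, mul_div_cancel₀ _ (NeZero.ne (n : ℂ)), Complex.exp_pi_mul_I]

lemma norm_zeta (n : ℕ) : ‖zeta n‖ = 1 := by
  have h : (Real.pi * Complex.I / n : ℂ) = ((Real.pi / n : ℝ) : ℂ) * Complex.I := by
    push_cast
    ring
  rw [zeta, h, Complex.norm_exp_ofReal_mul_I]

variable {n : ℕ}

/-- The sign `-1` if adding the standard representatives of `x` and `u` wraps around `n`. -/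
def wrapSign (x u : ZMod n) : ℝ := if x.val + u.val < n then 1 else -1

lemma abs_wrapSign (x u : ZMod n) : |wrapSign x u| = 1 := by
  unfold wrapSign
  split_ifs <;> simp

/-- The powers of `zeta n`, started at `r`. Multiplying by them turns periodic correlations into
negacyclic ones. -/
def twist (r y : ZMod n) : ℂ := zeta n ^ (y - r).val

lemma norm_twist (r y : ZMod n) : ‖twist r y‖ = 1 := by
  rw [twist, norm_pow, norm_zeta, one_pow]

variable [NeZero n]

/-- Autocorrelation of the rotation by `r` of `g`, with negacyclic wrap-around. -/
def negacyclicCorr (r : ZMod n) (g : ZMod n → ℝ) (u : ZMod n) : ℝ :=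
  ∑ x, wrapSign (x - r) u * (g (x + u) * g x)

lemma negacyclicCorr_zero (r : ZMod n) (g : ZMod n → ℝ) :
    negacyclicCorr r g 0 = ∑ x, g x ^ 2 := by
  simp [negacyclicCorr, wrapSign, ZMod.val_lt, sq]

lemma zeta_pow_val_add (x u : ZMod n) :
    zeta n ^ (x + u).val = wrapSign x u * (zeta n ^ x.val * zeta n ^ u.val) := by
  unfold wrapSign
  rw [← pow_add]
  split_ifs with h
  · simp [ZMod.val_add_of_lt h]
  · simp [ZMod.val_add_val_of_le (not_lt.mp h), pow_add, zeta_pow_self]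

lemma sum_wrapSign_left (u : ZMod n) : ∑ x, wrapSign x u = n - 2 * (u.val : ℝ) := by
  simp only [wrapSign, ← Nat.lt_sub_iff_add_lt]
  rw [sum_ite_val_lt (Nat.sub_le _ _), Nat.cast_sub u.val_lt.le]
  ring

lemma wrapSign_sub_self (y x : ZMod n) :
    wrapSign (y - x) x = if x.val < y.val + 1 then 1 else -1 := by
  refine if_congr ⟨fun h => ?_, fun h => ?_⟩ rfl rfl
  · have := ZMod.val_add_of_lt h
    rw [sub_add_cancel] at this
    omega
  · by_contra hle
    have := ZMod.val_add_val_of_le (not_lt.mp hle)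
    have := (y - x).val_lt
    rw [sub_add_cancel] at *
    omega

lemma sum_wrapSign_sub_self (y : ZMod n) :
    ∑ x, wrapSign (y - x) x = 2 * ((y.val : ℝ) + 1) - n := by
  simp only [wrapSign_sub_self]
  exact_mod_cast sum_ite_val_lt (Nat.succ_le_of_lt y.val_lt)

lemma norm_periodicCorr_twist (r : ZMod n) (g : ZMod n → ℝ) (u : ZMod n) :
    ‖periodicCorr (fun y => g y * twist r y) u‖ = |negacyclicCorr r g u| := by
  have hfactor : periodicCorr (fun y => g y * twist r y) u =
      zeta n ^ u.val * negacyclicCorr r g u := by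
    simp only [periodicCorr, negacyclicCorr, Complex.ofReal_sum, Finset.mul_sum]
    refine Finset.sum_congr rfl fun x _ => ?_
    have hunit : twist r x * conj (twist r x) = 1 := by
      simp [Complex.mul_conj', norm_twist]
    have hadd : twist r (x + u) = wrapSign (x - r) u * (twist r x * zeta n ^ u.val) := by
      rw [twist, add_sub_right_comm, zeta_pow_val_add, twist]
    rw [hadd, map_mul, Complex.conj_ofReal]
    push_cast
    linear_combination (wrapSign (x - r) u * (g (x + u) * g x) * zeta n ^ u.val : ℂ) * hunit
  rw [hfactor, norm_mul, norm_pow, norm_zeta, one_pow, one_mul, Complex.norm_real,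
    Real.norm_eq_abs]

lemma sum_norm_sq_periodicCorr_twist (r : ZMod n) :
    ∑ u, ‖periodicCorr (twist r) u‖ ^ 2 = (n : ℝ) ^ 3 / 3 + 2 * n / 3 := by
  have hcorr (u : ZMod n) : ‖periodicCorr (twist r) u‖ ^ 2 = ((n : ℝ) - 2 * u.val) ^ 2 := by
    have hone := norm_periodicCorr_twist r (fun _ => 1) u
    simp only [Complex.ofReal_one, one_mul, negacyclicCorr, mul_one] at hone
    rw [hone, sq_abs, ← sum_wrapSign_left]
    congr 1
    exact Fintype.sum_equiv (Equiv.subRight r) _ _ fun x => rfl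
  simp only [hcorr]
  rw [sum_val_eq_sum_range fun i => ((n : ℝ) - 2 * i) ^ 2, sum_range_sub_two_mul_sq]
  ring

/-- The sum of the wrap-around signs of all pairs with sum `-2 * r`. Through this number the
merit factor depends on the rotation `r`. -/
def rotationOffset (r : ZMod n) : ℝ := 2 * (((-2 * r).val : ℝ) + 1) - n

lemma abs_rotationOffset_le (r : ZMod n) : |rotationOffset r| ≤ n := by
  have hval : ((-2 * r).val : ℝ) + 1 ≤ n := by exact_mod_cast (-2 * r).val_lt
  rw [rotationOffset, abs_le]
  constructor <;> linarith [(-2 * r).val.cast_nonneg (α := ℝ)]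

lemma norm_sum_twist_mul_neg (r : ZMod n) :
    ‖∑ x, twist r x * twist r (-x)‖ = |rotationOffset r| := by
  have hfactor : ∑ x, twist r x * twist r (-x) =
      zeta n ^ (-2 * r).val * (∑ x, wrapSign (-2 * r - x) x : ℝ) := by
    rw [Complex.ofReal_sum, Finset.mul_sum]
    refine Fintype.sum_equiv (Equiv.subRight r) _ _ fun x => ?_
    have hsub : -2 * r - (x - r) = -x - r := by ring
    have hadd := zeta_pow_val_add (-2 * r - (x - r)) (x - r)
    have hsq : (wrapSign (-x - r) (x - r) : ℂ) ^ 2 = 1 := by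
      have : wrapSign (-x - r) (x - r) ^ 2 = 1 := by rw [← sq_abs, abs_wrapSign, one_pow]
      exact_mod_cast this
    rw [sub_add_cancel, hsub] at hadd
    simp only [Equiv.subRight_apply, hsub, hadd, twist]
    linear_combination (-(zeta n ^ (x - r).val * zeta n ^ (-x - r).val)) * hsq
  rw [hfactor, sum_wrapSign_sub_self, norm_mul, norm_pow, norm_zeta, one_pow, one_mul,
    Complex.norm_real, Real.norm_eq_abs, rotationOffset]

lemma charTransform_twist (ψ : AddChar (ZMod n) ℂ) (r m : ZMod n) :
    charTransform ψ (twist r) m = ψ (r * m) * ∑ i ∈ Finset.range n, (zeta n * ψ m) ^ i := by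
  rw [← sum_val_eq_sum_range fun i => (zeta n * ψ m) ^ i, Finset.mul_sum, charTransform]
  refine Fintype.sum_equiv (Equiv.subRight r) _ _ fun y => ?_
  have hy : y * m = r * m + (y - r).val • m := by
    rw [nsmul_eq_mul, ZMod.natCast_zmod_val]
    ring
  rw [hy, AddChar.map_add_eq_mul, AddChar.map_nsmul_eq_pow, Equiv.subRight_apply, mul_pow, twist]
  ring

lemma norm_geom_sum_mul_norm_sub_one {z : ℂ} {k : ℕ} (hz : z ^ k = -1) :
    ‖∑ i ∈ Finset.range k, z ^ i‖ * ‖z - 1‖ = 2 := by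
  rw [← norm_mul, geom_sum_mul, hz]
  norm_num

lemma zeta_mul_stdAddChar_pow (m : ZMod n) : (zeta n * ZMod.stdAddChar m) ^ n = -1 := by
  rw [mul_pow, zeta_pow_self, ← AddChar.map_nsmul_eq_pow]
  simp

lemma zeta_mul_stdAddChar (m : ZMod n) : zeta n * ZMod.stdAddChar m =
    Complex.exp (Complex.I * (2 * (Real.pi * ((2 * m.val + 1) / (2 * n))) : ℝ)) := by
  have hψ : ZMod.stdAddChar m = Complex.exp (2 * Real.pi * Complex.I * (m.val : ℤ) / n) := by
    rw [← ZMod.stdAddChar_coe]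
    simp
  have : (n : ℂ) ≠ 0 := NeZero.ne _
  rw [hψ, zeta, ← Complex.exp_add]
  congr 1
  push_cast
  field_simp
  ring

lemma norm_charTransform_twist (r m : ZMod n) :
    ‖charTransform ZMod.stdAddChar (twist r) m‖ =
      |Real.sin (Real.pi * ((2 * m.val + 1) / (2 * n)))|⁻¹ := by
  have hgeom := norm_geom_sum_mul_norm_sub_one (zeta_mul_stdAddChar_pow m)
  rw [charTransform_twist, norm_mul, AddChar.norm_apply, one_mul]
  nth_rw 2 [zeta_mul_stdAddChar] at hgeom
  rw [Complex.norm_exp_I_mul_ofReal_sub_one, mul_div_cancel_left₀ _ two_ne_zero, norm_mul,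
    Real.norm_ofNat, Real.norm_eq_abs] at hgeom
  exact eq_inv_of_mul_eq_one_left (by linarith)

lemma two_mul_le_sin_pi_mul {t : ℝ} (h0 : 0 ≤ t) (h1 : t ≤ 1 / 2) :
    2 * t ≤ Real.sin (Real.pi * t) := by
  have h := Real.mul_le_sin (x := Real.pi * t) (by positivity) (by nlinarith [Real.pi_pos])
  rwa [← mul_assoc, div_mul_cancel₀ _ Real.pi_ne_zero] at h

lemma inv_sin_pi_mul_le {t : ℝ} (h0 : 0 < t) (h1 : t < 1) :
    |Real.sin (Real.pi * t)|⁻¹ ≤ (2 * t)⁻¹ + (2 * (1 - t))⁻¹ := by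
  have hleft : 0 ≤ (2 * t)⁻¹ := by positivity
  have hright : 0 ≤ (2 * (1 - t))⁻¹ := inv_nonneg.mpr (by linarith)
  rcases le_total t (1 / 2) with h | h
  · have hsin := (two_mul_le_sin_pi_mul h0.le h).trans (le_abs_self _)
    linarith [inv_anti₀ (by linarith) hsin]
  · have hsin := two_mul_le_sin_pi_mul (t := 1 - t) (by linarith) (by linarith)
    rw [mul_one_sub Real.pi, Real.sin_pi_sub] at hsin
    linarith [inv_anti₀ (by linarith) (hsin.trans (le_abs_self _))]

lemma norm_charTransform_twist_le (r m : ZMod n) :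
    ‖charTransform ZMod.stdAddChar (twist r) m‖ ≤
      n * ((m.val : ℝ) + 1)⁻¹ + n * ((n : ℝ) - m.val)⁻¹ := by
  have hn : (0 : ℝ) < n := Nat.cast_pos.mpr (NeZero.pos n)
  have hm : (m.val : ℝ) + 1 ≤ n := by exact_mod_cast m.val_lt
  have hlt : (2 * m.val + 1) / (2 * n : ℝ) < 1 := by
    rw [div_lt_one (by positivity)]
    linarith
  rw [norm_charTransform_twist]
  refine (inv_sin_pi_mul_le (by positivity) hlt).trans (add_le_add ?_ ?_)
  · rw [← div_eq_mul_inv, inv_le_comm₀ (by positivity) (by positivity), inv_div]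
    field_simp
    linarith
  · have hsub : 0 < (n : ℝ) - m.val := by linarith
    rw [← div_eq_mul_inv, inv_le_comm₀ (by linarith) (by positivity), inv_div]
    field_simp
    linarith

lemma sum_norm_charTransform_twist_le (r : ZMod n) :
    ∑ m, ‖charTransform ZMod.stdAddChar (twist r) m‖ ≤ 2 * n * (1 + Real.log n) := by
  have hharmonic : ∑ i ∈ Finset.range n, ((i : ℝ) + 1)⁻¹ ≤ 1 + Real.log n := by
    simpa [harmonic] using harmonic_le_one_add_log n
  have hreflect : ∑ i ∈ Finset.range n, ((n : ℝ) - i)⁻¹ =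
      ∑ i ∈ Finset.range n, ((i : ℝ) + 1)⁻¹ := by
    rw [← Finset.sum_range_reflect]
    refine Finset.sum_congr rfl fun i hi => ?_
    rw [Nat.sub_sub, Nat.cast_sub (by grind)]
    push_cast
    congr 1
    ring
  calc ∑ m, ‖charTransform ZMod.stdAddChar (twist r) m‖
      ≤ ∑ m : ZMod n, (n * ((m.val : ℝ) + 1)⁻¹ + n * ((n : ℝ) - m.val)⁻¹) :=
        Finset.sum_le_sum fun m _ => norm_charTransform_twist_le r m
    _ = 2 * n * ∑ i ∈ Finset.range n, ((i : ℝ) + 1)⁻¹ := by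
        rw [sum_val_eq_sum_range fun i => (n : ℝ) * ((i : ℝ) + 1)⁻¹ + n * ((n : ℝ) - i)⁻¹,
          Finset.sum_add_distrib, ← Finset.mul_sum, ← Finset.mul_sum, hreflect]
        ring
    _ ≤ 2 * n * (1 + Real.log n) := by gcongr

end NegacyclicTwist

section NegacyclicCorrelation

/-- The order of magnitude of the error in the estimates of sums of squared correlations. -/
def errorTerm (n : ℕ) : ℝ := (n : ℝ) ^ (7 / 4 : ℝ) * (1 + Real.log n) ^ 4

lemma rpow_le_errorTerm {n : ℕ} (hn : 1 ≤ n) {a : ℝ} (ha : a ≤ 7 / 4) :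
    (n : ℝ) ^ a ≤ errorTerm n := by
  have hn1 : (1 : ℝ) ≤ n := by exact_mod_cast hn
  exact (Real.rpow_le_rpow_of_exponent_le hn1 ha).trans <| le_mul_of_one_le_right (by positivity) <|
    one_le_pow₀ (by linarith [Real.log_nonneg hn1])

lemma natCast_le_errorTerm {n : ℕ} (hn : 1 ≤ n) : (n : ℝ) ≤ errorTerm n := by
  simpa using rpow_le_errorTerm hn (a := 1) (by norm_num)

lemma sum_quadraticChar_add_mul {F : Type*} [Field F] [Fintype F] [DecidableEq F]
    (hF : ringChar F ≠ 2) (u : F) :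
    ∑ x, (quadraticChar F (x + u) : ℝ) * quadraticChar F x =
      (if u = 0 then (Fintype.card F : ℝ) else 0) - 1 := by
  have hreflect : ∑ x, quadraticChar F (x + u) * quadraticChar F x =
      ∑ j, quadraticChar F (u - j) * quadraticChar F (0 - j) :=
    Fintype.sum_equiv (Equiv.neg F) _ _ fun x => by simp [add_comm]
  rw [sum_quadraticChar_mul hF] at hreflect
  exact_mod_cast hreflect

lemma sum_norm_charTransform_twist_pow_le {n : ℕ} [NeZero n] (r : ZMod n) :
    5 * (n : ℝ) ^ (3 / 4 : ℝ) * (∑ m, ‖charTransform ZMod.stdAddChar (twist r) m‖) ^ 4 /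
      (n : ℝ) ^ 3 ≤ 80 * errorTerm n := by
  have hn0 : (0 : ℝ) < n := Nat.cast_pos.mpr (NeZero.pos n)
  rw [div_le_iff₀ (pow_pos hn0 3)]
  calc 5 * (n : ℝ) ^ (3 / 4 : ℝ) * (∑ m, ‖charTransform ZMod.stdAddChar (twist r) m‖) ^ 4
      ≤ 5 * (n : ℝ) ^ (3 / 4 : ℝ) * (2 * n * (1 + Real.log n)) ^ 4 := by
        gcongr
        exact sum_norm_charTransform_twist_le r
    _ = 80 * ((n : ℝ) ^ (3 / 4 : ℝ) * n * (1 + Real.log n) ^ 4) * (n : ℝ) ^ 3 := by ring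
    _ = 80 * errorTerm n * (n : ℝ) ^ 3 := by
        rw [← Real.rpow_add_one hn0.ne', errorTerm]
        norm_num

variable {p : ℕ} [Fact p.Prime]

lemma abs_sum_negacyclicCorr_quadraticChar_sub_le (hp : p ≠ 2) (r : ZMod p) :
    |∑ u, negacyclicCorr r (fun x => quadraticChar (ZMod p) x) u ^ 2 -
      (4 * (p : ℝ) ^ 2 / 3 - 4 / 3 + rotationOffset r ^ 2)| ≤ 80 * errorTerm p := by
  have hp0 : (p : ℝ) ≠ 0 := NeZero.ne _
  have hmoment := abs_sum_periodicCorr_sub_le (by rwa [ZMod.ringChar_zmod_n])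
    (ZMod.isPrimitive_stdAddChar p) (twist r)
  have hcorr (u : ZMod p) : ‖periodicCorr (fun y => quadraticChar (ZMod p) y * twist r y) u‖ ^ 2 =
      negacyclicCorr r (fun x => quadraticChar (ZMod p) x) u ^ 2 := by
    rw [← sq_abs (negacyclicCorr r _ u), ← norm_periodicCorr_twist]
    simp only [Complex.ofReal_intCast]
  simp only [hcorr, ZMod.card, norm_twist, one_pow, Finset.sum_const, Finset.card_univ,
    nsmul_eq_mul, mul_one, sum_norm_sq_periodicCorr_twist, norm_sum_twist_mul_neg,
    sq_abs] at hmoment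
  refine (le_of_eq ?_).trans (hmoment.trans (sum_norm_charTransform_twist_pow_le r))
  congr 2
  field_simp
  ring

lemma abs_sum_compl_negacyclicCorr_quadraticChar_sub_le (hp : p ≠ 2) (r : ZMod p) :
    |∑ u ∈ {0}ᶜ, negacyclicCorr r (fun x => quadraticChar (ZMod p) x) u ^ 2 -
      ((p : ℝ) ^ 2 / 3 + rotationOffset r ^ 2)| ≤ 83 * errorTerm p := by
  have hp1 : (1 : ℝ) ≤ p := by exact_mod_cast NeZero.one_le
  have hpE := natCast_le_errorTerm (n := p) NeZero.one_le
  have hfull := abs_sum_negacyclicCorr_quadraticChar_sub_le hp r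
  have hzero : negacyclicCorr r (fun x => quadraticChar (ZMod p) x) 0 = p - 1 := by
    have hsum := sum_quadraticChar_add_mul (by rwa [ZMod.ringChar_zmod_n]) (0 : ZMod p)
    simp only [add_zero, ← sq, if_pos, ZMod.card] at hsum
    rw [negacyclicCorr_zero, hsum]
  rw [← Finset.sum_add_sum_compl {0}, Finset.sum_singleton, hzero] at hfull
  rw [abs_le] at hfull ⊢
  constructor <;> nlinarith

end NegacyclicCorrelation

section Autocorrelation

variable {n : ℕ}

lemma seqAutocorr_eq_zero {m : ℤ} {a : ℤ → ℝ} (ha : IsSeq m a) {k : ℤ} (hk : m ≤ |k|) :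
    seqAutocorr a k = 0 := by
  refine finsum_eq_zero_of_forall_eq_zero fun i => ?_
  by_contra h
  have hleft := ha i (left_ne_zero_of_mul h)
  have hright := ha _ (right_ne_zero_of_mul h)
  rcases abs_cases k with hk' | hk' <;> omega

/-- The sequence of length `n` obtained by rotating the periodic sequence `g` by `r`. -/
def rotatedSeq (r : ℤ) (g : ZMod n → ℝ) (i : ℤ) : ℝ :=
  if 0 ≤ i ∧ i < n then g ((i + r : ℤ) : ZMod n) else 0

lemma isSeq_rotatedSeq (r : ℤ) (g : ZMod n → ℝ) : IsSeq n (rotatedSeq r g) := by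
  intro i hi
  by_contra h
  exact hi (if_neg h)

variable [NeZero n]

lemma seqAutocorr_eq_sum {a : ℤ → ℝ} (ha : IsSeq n a) (k : ℤ) :
    seqAutocorr a k = ∑ y : ZMod n, a y.val * a (y.val + k) := by
  rw [sum_val_eq_sum_range fun i => a i * a (i + k), seqAutocorr,
    finsum_eq_sum_of_support_subset (s := (Finset.range n).map Nat.castEmbedding)]
  · simp
  · intro i hi
    have h := ha i (left_ne_zero_of_mul hi)
    simp only [Finset.coe_map, Finset.coe_range, Set.mem_image, Set.mem_Iio]
    exact ⟨i.toNat, by omega, by simp [h.1]⟩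

lemma sum_Ioo_eq_sum_val (f : ℤ → ℝ) :
    ∑ k ∈ Finset.Ioo 0 (n : ℤ), f k = ∑ u ∈ ({0}ᶜ : Finset (ZMod n)), f u.val := by
  have hval {k : ℤ} (hk : k ∈ Finset.Ioo 0 (n : ℤ)) : ((k : ZMod n).val : ℤ) = k := by
    rw [Finset.mem_Ioo] at hk
    rw [ZMod.val_intCast, Int.emod_eq_of_lt hk.1.le hk.2]
  refine Finset.sum_nbij' (fun k => (k : ZMod n)) (fun u => u.val) (fun k hk => ?_) (fun u hu => ?_)
    (fun k hk => hval hk) (fun u _ => by simp) fun k hk => by rw [hval hk]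
  · have hpos := (Finset.mem_Ioo.mp hk).1
    rw [Finset.mem_compl, Finset.mem_singleton, ← ZMod.val_eq_zero]
    have := hval hk
    omega
  · rw [Finset.mem_compl, Finset.mem_singleton, ← ZMod.val_eq_zero] at hu
    have := u.val_lt
    rw [Finset.mem_Ioo]
    omega

lemma finsum_seqAutocorr_sq {a : ℤ → ℝ} (ha : IsSeq n a) :
    ∑ᶠ u ∈ {u : ℤ | u ≠ 0}, seqAutocorr a u ^ 2 =
      ∑ u ∈ ({0}ᶜ : Finset (ZMod n)),
        (seqAutocorr a u.val ^ 2 + seqAutocorr a ((u.val : ℤ) - n) ^ 2) := by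
  have hsupport : ∑ᶠ u ∈ {u : ℤ | u ≠ 0}, seqAutocorr a u ^ 2 =
      ∑ k ∈ Finset.Ioo 0 (n : ℤ) ∪ Finset.Ioo (-n : ℤ) 0, seqAutocorr a k ^ 2 := by
    refine finsum_mem_eq_sum_of_inter_support_eq _ (Set.ext fun k => ?_)
    simp only [Set.mem_inter_iff, and_congr_left_iff, Function.mem_support]
    intro hk
    have hlt : |k| < n := by
      by_contra h
      exact hk (by rw [seqAutocorr_eq_zero ha (not_lt.mp h), sq, zero_mul])
    simp only [Finset.coe_union, Finset.coe_Ioo, Set.mem_union, Set.mem_Ioo, Set.mem_ofPred_eq]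
    rw [abs_lt] at hlt
    omega
  have hdisjoint : Disjoint (Finset.Ioo 0 (n : ℤ)) (Finset.Ioo (-n : ℤ) 0) :=
    Finset.disjoint_left.mpr fun k hk hk' => by
      rw [Finset.mem_Ioo] at hk hk'
      omega
  have hshift : ∑ k ∈ Finset.Ioo (-n : ℤ) 0, seqAutocorr a k ^ 2 =
      ∑ k ∈ Finset.Ioo 0 (n : ℤ), seqAutocorr a (k - n) ^ 2 := by
    refine Finset.sum_nbij' (· + (n : ℤ)) (· - (n : ℤ)) ?_ ?_ ?_ ?_ ?_ <;>
      simp only [Finset.mem_Ioo, add_sub_cancel_right, sub_add_cancel, implies_true] <;> omega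
  rw [hsupport, Finset.sum_union hdisjoint, hshift,
    sum_Ioo_eq_sum_val fun k => seqAutocorr a k ^ 2,
    sum_Ioo_eq_sum_val fun k => seqAutocorr a (k - n) ^ 2, Finset.sum_add_distrib]

lemma rotatedSeq_val (r : ℤ) (g : ZMod n → ℝ) (y : ZMod n) :
    rotatedSeq r g y.val = g (y + r) := by
  have hy := y.val_lt
  rw [rotatedSeq, if_pos (by omega)]
  simp

lemma rotatedSeq_val_add_val (r : ℤ) (g : ZMod n → ℝ) (y u : ZMod n) :
    rotatedSeq r g (y.val + u.val) = if y.val + u.val < n then g (y + r + u) else 0 := by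
  refine if_congr (by omega) ?_ rfl
  push_cast
  simp only [ZMod.natCast_zmod_val, add_right_comm]

lemma rotatedSeq_val_add_val_sub (r : ℤ) (g : ZMod n → ℝ) (y u : ZMod n) :
    rotatedSeq r g (y.val + (u.val - n)) = if y.val + u.val < n then 0 else g (y + r + u) := by
  have hy := y.val_lt
  have hu := u.val_lt
  rw [rotatedSeq, ← ite_not]
  refine if_congr (by omega) rfl ?_
  push_cast
  simp only [ZMod.natCast_zmod_val, CharP.cast_eq_zero, sub_zero, add_right_comm]

lemma seqAutocorr_rotatedSeq_val (r : ℤ) (g : ZMod n → ℝ) (u : ZMod n) :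
    seqAutocorr (rotatedSeq r g) u.val =
      (∑ x, g (x + u) * g x + negacyclicCorr (r : ZMod n) g u) / 2 := by
  rw [seqAutocorr_eq_sum (isSeq_rotatedSeq r g), negacyclicCorr, ← Finset.sum_add_distrib,
    Finset.sum_div]
  refine Fintype.sum_equiv (Equiv.addRight (r : ZMod n)) _ _ fun y => ?_
  rw [rotatedSeq_val, rotatedSeq_val_add_val, Equiv.coe_addRight, add_sub_cancel_right, wrapSign]
  split_ifs <;> ring

lemma seqAutocorr_rotatedSeq_val_sub (r : ℤ) (g : ZMod n → ℝ) (u : ZMod n) :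
    seqAutocorr (rotatedSeq r g) (u.val - n) =
      (∑ x, g (x + u) * g x - negacyclicCorr (r : ZMod n) g u) / 2 := by
  rw [seqAutocorr_eq_sum (isSeq_rotatedSeq r g), negacyclicCorr, ← Finset.sum_sub_distrib,
    Finset.sum_div]
  refine Fintype.sum_equiv (Equiv.addRight (r : ZMod n)) _ _ fun y => ?_
  rw [rotatedSeq_val, rotatedSeq_val_add_val_sub, Equiv.coe_addRight, add_sub_cancel_right,
    wrapSign]
  split_ifs <;> ring

lemma finsum_seqAutocorr_sq_rotatedSeq (r : ℤ) (g : ZMod n → ℝ) :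
    ∑ᶠ u ∈ {u : ℤ | u ≠ 0}, seqAutocorr (rotatedSeq r g) u ^ 2 =
      (∑ u ∈ ({0}ᶜ : Finset (ZMod n)), (∑ x, g (x + u) * g x) ^ 2 +
        ∑ u ∈ ({0}ᶜ : Finset (ZMod n)), negacyclicCorr (r : ZMod n) g u ^ 2) / 2 := by
  rw [finsum_seqAutocorr_sq (isSeq_rotatedSeq r g), ← Finset.sum_add_distrib, Finset.sum_div]
  refine Finset.sum_congr rfl fun u _ => ?_
  rw [seqAutocorr_rotatedSeq_val, seqAutocorr_rotatedSeq_val_sub]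
  ring

end Autocorrelation

section BinaryQuadraticCharacter

variable {F : Type*} [Field F] [Fintype F] [DecidableEq F]

/-- The quadratic character of `F`, with the value at zero replaced by one. -/
def binaryQuadChar (x : F) : ℝ := if x = 0 then 1 else quadraticChar F x

lemma binaryQuadChar_mul_sub {u : F} (hu : u ≠ 0) (x : F) :
    binaryQuadChar (x + u) * binaryQuadChar x -
        (quadraticChar F (x + u) : ℝ) * quadraticChar F x =
      (if x = -u then (quadraticChar F (-u) : ℝ) else 0) +
        if x = 0 then (quadraticChar F u : ℝ) else 0 := by
  unfold binaryQuadChar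
  rcases eq_or_ne x 0 with rfl | h0
  · simp [hu, eq_comm (a := (0 : F))]
  · rcases eq_or_ne x (-u) with rfl | h1
    · simp [hu]
    · simp [h0, h1, add_eq_zero_iff_eq_neg]

lemma abs_weighted_corr_sub_le {c : F → ℝ} (hc : ∀ x, |c x| ≤ 1) {u : F} (hu : u ≠ 0) :
    |∑ x, c x * (binaryQuadChar (x + u) * binaryQuadChar x) -
      ∑ x, c x * ((quadraticChar F (x + u) : ℝ) * quadraticChar F x)| ≤ 2 := by
  have hχ (x : F) : |(quadraticChar F x : ℝ)| ≤ 1 := by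
    exact_mod_cast abs_quadraticChar_le_one x
  have hdiff : ∑ x, c x * (binaryQuadChar (x + u) * binaryQuadChar x) -
      ∑ x, c x * ((quadraticChar F (x + u) : ℝ) * quadraticChar F x) =
      c (-u) * quadraticChar F (-u) + c 0 * quadraticChar F u := by
    simp only [← Finset.sum_sub_distrib, ← mul_sub, binaryQuadChar_mul_sub hu, mul_add, mul_ite,
      mul_zero, Finset.sum_add_distrib, Finset.sum_ite_eq', Finset.mem_univ, if_true]
  rw [hdiff]
  refine (abs_add_le _ _).trans ?_
  rw [abs_mul, abs_mul, ← one_add_one_eq_two]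
  gcongr <;> exact mul_le_one₀ (hc _) (abs_nonneg _) (hχ _)

lemma sum_sq_binaryQuadChar_corr_le (hF : ringChar F ≠ 2) :
    ∑ u ∈ ({0}ᶜ : Finset F), (∑ x, binaryQuadChar (x + u) * binaryQuadChar x) ^ 2 ≤
      9 * Fintype.card F := by
  have hterm : ∀ u ∈ ({0}ᶜ : Finset F),
      (∑ x, binaryQuadChar (x + u) * binaryQuadChar x) ^ 2 ≤ 9 := by
    intro u hu
    have hu : u ≠ 0 := by simpa using hu
    have hdiff := abs_weighted_corr_sub_le (c := fun _ => 1) (by simp) hu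
    simp only [one_mul] at hdiff
    rw [sum_quadraticChar_add_mul hF, if_neg hu, abs_le] at hdiff
    nlinarith
  refine (Finset.sum_le_card_nsmul _ _ 9 hterm).trans ?_
  rw [nsmul_eq_mul, mul_comm]
  gcongr
  exact Finset.card_le_univ _

end BinaryQuadraticCharacter

section SumsOfSquares

lemma abs_sq_sub_sq_le {x y δ η : ℝ} (hη : 0 < η) (h : |x - y| ≤ δ) :
    |x ^ 2 - y ^ 2| ≤ y ^ 2 / η + δ ^ 2 * (η + 1) := by
  have hdecomp : x ^ 2 - y ^ 2 = (x - y) ^ 2 + 2 * ((x - y) * y) := by ring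
  have hAMGM : 2 * (δ * |y|) ≤ y ^ 2 / η + δ ^ 2 * η := by
    have hsq : y ^ 2 / η + δ ^ 2 * η - 2 * (δ * |y|) = (|y| - δ * η) ^ 2 / η := by
      rw [← sq_abs y]
      field_simp
      ring
    have : 0 ≤ (|y| - δ * η) ^ 2 / η := by positivity
    linarith
  calc |x ^ 2 - y ^ 2| ≤ |x - y| ^ 2 + 2 * (|x - y| * |y|) := by
        rw [hdecomp]
        refine (abs_add_le _ _).trans_eq ?_
        rw [abs_mul, abs_mul, abs_two, abs_pow]
    _ ≤ δ ^ 2 + 2 * (δ * |y|) := by gcongr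
    _ ≤ y ^ 2 / η + δ ^ 2 * (η + 1) := by linarith

lemma abs_sum_sq_sub_sum_sq_le {ι : Type*} {t : Finset ι} {x y : ι → ℝ} {δ η : ℝ} (hη : 0 < η)
    (h : ∀ i ∈ t, |x i - y i| ≤ δ) :
    |∑ i ∈ t, x i ^ 2 - ∑ i ∈ t, y i ^ 2| ≤
      (∑ i ∈ t, y i ^ 2) / η + t.card * (δ ^ 2 * (η + 1)) := by
  rw [← Finset.sum_sub_distrib, Finset.sum_div, ← nsmul_eq_mul, ← Finset.sum_const,
    ← Finset.sum_add_distrib]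
  exact (Finset.abs_sum_le_sum_abs _ _).trans <|
    Finset.sum_le_sum fun i hi => abs_sq_sub_sq_le hη (h i hi)

end SumsOfSquares

section MeritFactor

variable {p : ℕ} [Fact p.Prime]

lemma abs_sum_negacyclicCorr_binaryQuadChar_sub_le (hp : p ≠ 2) (r : ZMod p) :
    |∑ u ∈ {0}ᶜ, negacyclicCorr r binaryQuadChar u ^ 2 -
      ((p : ℝ) ^ 2 / 3 + rotationOffset r ^ 2)| ≤ 176 * errorTerm p := by
  have hp1 : (1 : ℝ) ≤ p := by exact_mod_cast NeZero.one_le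
  have hχ := abs_sum_compl_negacyclicCorr_quadraticChar_sub_le hp r
  have hη1 : 1 ≤ √(p : ℝ) := Real.one_le_sqrt.mpr hp1
  have hη0 : 0 < √(p : ℝ) := by linarith
  have hdiff := abs_sum_sq_sub_sum_sq_le (t := {0}ᶜ) (x := negacyclicCorr r binaryQuadChar)
    (y := negacyclicCorr r fun x => quadraticChar (ZMod p) x) hη0 fun u hu =>
      abs_weighted_corr_sub_le (fun x => (abs_wrapSign (x - r) u).le) (by simpa using hu)
  have hcard : (({0}ᶜ : Finset (ZMod p)).card : ℝ) ≤ p := by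
    exact_mod_cast (Finset.card_le_univ _).trans_eq (ZMod.card p)
  have hηE : √(p : ℝ) * p ≤ errorTerm p := by
    rw [Real.sqrt_eq_rpow, ← Real.rpow_add_one (by positivity)]
    exact rpow_le_errorTerm NeZero.one_le (by norm_num)
  have hχdiv : (∑ u ∈ {0}ᶜ, negacyclicCorr r (fun x => quadraticChar (ZMod p) x) u ^ 2) /
      √(p : ℝ) ≤ 85 * errorTerm p := by
    have hQ : rotationOffset r ^ 2 ≤ (p : ℝ) ^ 2 :=
      sq_le_sq' (abs_le.mp (abs_rotationOffset_le r)).1 (abs_le.mp (abs_rotationOffset_le r)).2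
    have hp2 : (p : ℝ) ^ 2 ≤ errorTerm p * √(p : ℝ) := by
      calc (p : ℝ) ^ 2 = √(p : ℝ) * p * √(p : ℝ) := by
            rw [mul_right_comm, Real.mul_self_sqrt (by positivity), sq]
        _ ≤ errorTerm p * √(p : ℝ) := by gcongr
    rw [div_le_iff₀ hη0]
    nlinarith [(abs_le.mp hχ).2]
  have hrest : (({0}ᶜ : Finset (ZMod p)).card : ℝ) * (2 ^ 2 * (√(p : ℝ) + 1)) ≤
      8 * errorTerm p := by
    calc (({0}ᶜ : Finset (ZMod p)).card : ℝ) * (2 ^ 2 * (√(p : ℝ) + 1))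
        ≤ p * (2 ^ 2 * (√(p : ℝ) + √(p : ℝ))) := by gcongr
      _ = 8 * (√(p : ℝ) * p) := by ring
      _ ≤ 8 * errorTerm p := by gcongr
  rw [abs_le] at hχ hdiff ⊢
  constructor <;> linarith

lemma abs_finsum_seqAutocorr_sq_sub_le (hp : p ≠ 2) (r : ℤ) :
    |∑ᶠ u ∈ {u : ℤ | u ≠ 0},
        seqAutocorr (rotatedSeq r (binaryQuadChar (F := ZMod p))) u ^ 2 -
      ((p : ℝ) ^ 2 / 3 + rotationOffset (r : ZMod p) ^ 2) / 2| ≤ 100 * errorTerm p := by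
  have hperiodic := sum_sq_binaryQuadChar_corr_le (F := ZMod p) (by rwa [ZMod.ringChar_zmod_n])
  have hperiodic0 : 0 ≤ ∑ u ∈ ({0}ᶜ : Finset (ZMod p)),
      (∑ x, binaryQuadChar (x + u) * binaryQuadChar x) ^ 2 :=
    Finset.sum_nonneg fun _ _ => sq_nonneg _
  have hnegacyclic := abs_sum_negacyclicCorr_binaryQuadChar_sub_le hp (r : ZMod p)
  have hpE := natCast_le_errorTerm (n := p) NeZero.one_le
  rw [ZMod.card] at hperiodic
  rw [finsum_seqAutocorr_sq_rotatedSeq]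
  rw [abs_le] at hnegacyclic ⊢
  constructor <;> linarith

lemma seqRotate_legendreSeq (s : ℝ) :
    seqRotate p s (legendreSeq p) = rotatedSeq ⌊(p : ℝ) * s⌋ (binaryQuadChar (F := ZMod p)) := by
  have hp0 : (0 : ℤ) < p := by exact_mod_cast NeZero.pos p
  ext i
  refine if_congr Iff.rfl ?_ rfl
  rw [legendreSeq, if_pos ⟨Int.emod_nonneg _ hp0.ne', Int.emod_lt_of_pos _ hp0⟩, binaryQuadChar,
    ← jacobiSym.mod_left, ← jacobiSym.legendreSym.to_jacobiSym, legendreSym, Int.cast_natCast]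
  refine if_congr ?_ rfl rfl
  rw [ZMod.intCast_zmod_eq_zero_iff_dvd, Int.dvd_iff_emod_eq_zero]

lemma abs_inv_seqMeritFactor_sub_le (hp : p ≠ 2) (s : ℝ) :
    |1 / seqMeritFactor p (seqRotate p s (legendreSeq p)) -
      (1 / 3 + (|rotationOffset (⌊(p : ℝ) * s⌋ : ZMod p)| / p) ^ 2) / 2| ≤
      100 * errorTerm p / (p : ℝ) ^ 2 := by
  have hp0 : (0 : ℝ) < p := Nat.cast_pos.mpr (NeZero.pos p)
  have hp2 : (0 : ℝ) < (p : ℝ) ^ 2 := pow_pos hp0 2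
  have hscale : 1 / seqMeritFactor p (seqRotate p s (legendreSeq p)) -
      (1 / 3 + (|rotationOffset (⌊(p : ℝ) * s⌋ : ZMod p)| / p) ^ 2) / 2 =
      (∑ᶠ u ∈ {u : ℤ | u ≠ 0},
          seqAutocorr (rotatedSeq ⌊(p : ℝ) * s⌋ (binaryQuadChar (F := ZMod p))) u ^ 2 -
        ((p : ℝ) ^ 2 / 3 + rotationOffset (⌊(p : ℝ) * s⌋ : ZMod p) ^ 2) / 2) / (p : ℝ) ^ 2 := by
    rw [seqMeritFactor, one_div_div, seqRotate_legendreSeq, Int.cast_natCast, div_pow, sq_abs]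
    field_simp
  rw [hscale, abs_div, abs_of_pos hp2]
  gcongr
  exact abs_finsum_seqAutocorr_sq_sub_le hp _

end MeritFactor

section Asymptotics

open Filter Topology

lemma tendsto_one_add_log_div_rpow {a : ℝ} (ha : 0 < a) :
    Tendsto (fun x : ℝ => (1 + Real.log x) / x ^ a) atTop (𝓝 0) := by
  have hsum := (tendsto_rpow_neg_atTop ha).add
    (isLittleO_log_rpow_atTop ha).tendsto_div_nhds_zero
  rw [add_zero] at hsum
  refine hsum.congr' ?_
  filter_upwards [eventually_gt_atTop 0] with x hx
  rw [Real.rpow_neg hx.le, add_div, one_div]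

lemma tendsto_errorTerm_div_sq :
    Tendsto (fun n : ℕ => errorTerm n / (n : ℝ) ^ 2) atTop (𝓝 0) := by
  have hpow := ((tendsto_one_add_log_div_rpow (a := 1 / 16) (by norm_num)).comp
    tendsto_natCast_atTop_atTop).pow 4
  rw [zero_pow four_ne_zero] at hpow
  refine hpow.congr' ?_
  filter_upwards [eventually_gt_atTop 0] with n hn
  have hn0 : (0 : ℝ) < n := Nat.cast_pos.mpr hn
  have hsixteenth : ((n : ℝ) ^ (1 / 16 : ℝ)) ^ 4 = (n : ℝ) ^ (1 / 4 : ℝ) := by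
    rw [← Real.rpow_natCast, ← Real.rpow_mul hn0.le]
    norm_num
  have hsplit : (n : ℝ) ^ 2 = (n : ℝ) ^ (7 / 4 : ℝ) * (n : ℝ) ^ (1 / 4 : ℝ) := by
    rw [← Real.rpow_add hn0]
    norm_num
  rw [Function.comp_apply, div_pow, hsixteenth, errorTerm, hsplit]
  field_simp

lemma abs_two_mul_fract_neg_two_mul_sub_one (x : ℝ) :
    |2 * Int.fract (-2 * x) - 1| = |4 * |x - round x| - 1| := by
  set d := x - round x with hd
  have hfract : Int.fract (-2 * x) = Int.fract (-2 * d) := by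
    rw [Int.fract_eq_fract]
    exact ⟨-2 * round x, by push_cast; ring⟩
  have hhalf := abs_le.mp (abs_sub_round x)
  rw [hfract]
  rcases lt_or_ge 0 d with hpos | hneg
  · have : Int.fract (-2 * d) = 1 - 2 * d :=
      Int.fract_eq_iff.mpr ⟨by linarith, by linarith, -1, by push_cast; ring⟩
    rw [this, abs_of_pos hpos, abs_sub_comm]
    congr 1
    ring
  · rw [abs_of_nonpos hneg]
    rcases hhalf.1.eq_or_lt with heq | hlt
    · rw [← hd] at heq
      norm_num [← heq]
    · have : Int.fract (-2 * d) = -2 * d :=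
        Int.fract_eq_self.mpr ⟨by linarith, by linarith⟩
      rw [this]
      ring_nf

lemma rotationOffset_intCast_div {n : ℕ} [NeZero n] (r : ℤ) :
    rotationOffset (r : ZMod n) / n = 2 * Int.fract (-2 * (r / n : ℝ)) - 1 + 2 / n := by
  have hn : (n : ℝ) ≠ 0 := NeZero.ne _
  have hval : ((-2 * (r : ZMod n)).val : ℝ) = ((-2 * r % n : ℤ) : ℝ) := by
    rw [← ZMod.val_intCast]
    push_cast
    rfl
  have hfract : Int.fract (-2 * (r / n : ℝ)) = ((-2 * r % n : ℤ) : ℝ) / n := by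
    rw [← Int.fract_div_intCast_eq_div_intCast_mod]
    push_cast
    ring_nf
  rw [rotationOffset, hval, hfract]
  field_simp
  ring

lemma tendsto_floor_mul_div (s : ℝ) :
    Tendsto (fun n : ℕ => (⌊(n : ℝ) * s⌋ / n : ℝ)) atTop (𝓝 s) := by
  have hlower : Tendsto (fun n : ℕ => s - 1 / (n : ℝ)) atTop (𝓝 s) := by
    simpa using tendsto_one_div_atTop_nhds_zero_nat.const_sub s
  refine tendsto_of_tendsto_of_tendsto_of_le_of_le' hlower tendsto_const_nhds ?_ ?_ <;>
    filter_upwards [eventually_gt_atTop 0] with n hn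
  all_goals have hn0 : (0 : ℝ) < n := Nat.cast_pos.mpr hn
  · rw [le_div_iff₀ hn0, sub_mul, one_div_mul_cancel hn0.ne', mul_comm]
    exact (Int.sub_one_lt_floor _).le
  · rw [div_le_iff₀ hn0, mul_comm s]
    exact Int.floor_le _

lemma continuous_abs_sub_round : Continuous fun x : ℝ => |x - round x| := by
  simp only [← UnitAddCircle.norm_eq]
  exact continuous_norm.comp (AddCircle.continuous_mk' 1)

lemma tendsto_rotationOffset_div (s : ℝ) :
    Tendsto (fun n : ℕ => |rotationOffset (⌊(n : ℝ) * s⌋ : ZMod n)| / n) atTop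
      (𝓝 |4 * |s - round s| - 1|) := by
  have hlim : Tendsto (fun n : ℕ => |2 * Int.fract (-2 * (⌊(n : ℝ) * s⌋ / n : ℝ)) - 1|) atTop
      (𝓝 |4 * |s - round s| - 1|) := by
    simp only [abs_two_mul_fract_neg_two_mul_sub_one]
    have hcont : Continuous fun x : ℝ => |4 * |x - round x| - 1| :=
      ((continuous_abs_sub_round.const_mul 4).sub continuous_const).abs
    exact (hcont.tendsto s).comp (tendsto_floor_mul_div s)
  refine hlim.congr_dist <|
    squeeze_zero' (.of_forall fun _ => dist_nonneg) ?_ (tendsto_const_div_atTop_nhds_zero_nat 2)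
  filter_upwards [eventually_gt_atTop 0] with n hn
  have : NeZero n := ⟨hn.ne'⟩
  rw [← Nat.abs_cast n, ← abs_div, rotationOffset_intCast_div, Nat.abs_cast, dist_comm,
    Real.dist_eq]
  refine (abs_abs_sub_abs_le _ _).trans_eq ?_
  rw [add_sub_cancel_left, abs_of_nonneg (by positivity)]

theorem stmt4_general (s : ℝ) :
    Tendsto (fun p : ℕ => 1 / seqMeritFactor p (seqRotate p s (legendreSeq p)))
      (atTop ⊓ 𝓟 {p : ℕ | p.Prime ∧ Odd p}) (𝓝 (1 / 6 + 8 * (|s - round s| - 1 / 4) ^ 2)) := by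
  have hmain := (((tendsto_rotationOffset_div s).pow 2).const_add (1 / 3)).div_const 2
  have hlimit : (1 / 3 + |4 * |s - round s| - 1| ^ 2) / 2 =
      1 / 6 + 8 * (|s - round s| - 1 / 4) ^ 2 := by
    rw [sq_abs]
    ring
  rw [hlimit] at hmain
  have herror := tendsto_errorTerm_div_sq.const_mul 100
  rw [mul_zero] at herror
  refine (hmain.mono_left inf_le_left).congr_dist <|
    squeeze_zero' (.of_forall fun _ => dist_nonneg) ?_ (herror.mono_left inf_le_left)
  filter_upwards [mem_inf_of_right (mem_principal_self _)] with p ⟨hprime, hodd⟩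
  have : Fact p.Prime := ⟨hprime⟩
  rw [dist_comm, Real.dist_eq, ← mul_div_assoc]
  exact abs_inv_seqMeritFactor_sub_le (hodd.ne_two_of_dvd_nat dvd_rfl) s

lemma abs_sub_round_eq_abs {s : ℝ} (hs1 : -(1 / 2) < s) (hs2 : s ≤ 1 / 2) :
    |s - round s| = |s| := by
  rcases hs2.lt_or_eq with hlt | rfl
  · rw [round_eq_zero_iff.mpr ⟨by linarith, hlt⟩, Int.cast_zero, sub_zero]
  · norm_num [round_eq]

end Asymptotics

/-- (Høholdt–Jensen) As `p → ∞` through the odd primes, `1/F(L_s)` converges to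
`1/6 + 8(|s| - 1/4)²`, where `L` is the Legendre sequence of length `p`. -/
theorem stmt4 (s : ℝ) (hs1 : -(1/2) < s) (hs2 : s ≤ 1/2) :
    Filter.Tendsto
      (fun p : ℕ => 1 / seqMeritFactor p (seqRotate p s (legendreSeq p)))
      (Filter.atTop ⊓ Filter.principal {p : ℕ | p.Prime ∧ Odd p})
      (nhds (1/6 + 8 * (|s| - 1/4) ^ 2)) := by
  simpa only [abs_sub_round_eq_abs hs1 hs2] using stmt4_general s
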